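/- For the family 𝔤₁₂(z₃, w₁, w₂, θ₁, θ₂) with w₁ ≠ 0, the structure J is integrable, i.e. the Nijenhuis tensor N(E,F) = 0 for all E, F ∈ 𝔤, if and only if z₃ = −w₁. -/

import Mathlib

noncomputable section

/-- The bilinear antisymmetric bracket on ℝ⁴ determined by the structure constants. -/
def bk (z₃ w₁ w₂ θ₁ θ₂ : ℝ) (E F : Fin 4 → ℝ) : Fin 4 → ℝ :=
  (E 0 * F 1 - E 1 * F 0) • (![0, 0, -θ₁, -θ₂] : Fin 4 → ℝ) +
  (E 0 * F 2 - E 2 * F 0) • (![0, 0, 0, -w₁] : Fin 4 → ℝ) +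
  (E 0 * F 3 - E 3 * F 0) • (![0, 0, -z₃, 0] : Fin 4 → ℝ) +
  (E 1 * F 2 - E 2 * F 1) • (![0, 0, 0, -w₂] : Fin 4 → ℝ) +
  (E 1 * F 3 - E 3 * F 1) • (![0, 0, -(z₃ * w₂ / w₁), 0] : Fin 4 → ℝ) +
  (E 2 * F 3 - E 3 * F 2) • (![0, 0, 0, 0] : Fin 4 → ℝ)

/-- The almost Hermitian structure J with J(X)=Y, J(Y)=-X, J(Z)=W, J(W)=-Z. -/
def Jm (E : Fin 4 → ℝ) : Fin 4 → ℝ := ![-E 1, E 0, -E 3, E 2]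

/-- The Nijenhuis tensor of J. -/
def NT (z₃ w₁ w₂ θ₁ θ₂ : ℝ) (E F : Fin 4 → ℝ) : Fin 4 → ℝ :=
  bk z₃ w₁ w₂ θ₁ θ₂ E F + Jm (bk z₃ w₁ w₂ θ₁ θ₂ (Jm E) F) + Jm (bk z₃ w₁ w₂ θ₁ θ₂ E (Jm F)) -
    bk z₃ w₁ w₂ θ₁ θ₂ (Jm E) (Jm F)

theorem g12_integrable_iff (z₃ w₁ w₂ θ₁ θ₂ : ℝ) (hw : w₁ ≠ 0) :
    (∀ E F : Fin 4 → ℝ, NT z₃ w₁ w₂ θ₁ θ₂ E F = 0) ↔ z₃ = -w₁ := by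
  constructor
  · intro h
    have h1 := congrFun (h ![1, 0, 0, 0] ![0, 0, 1, 0]) 3
    simp [NT, bk, Jm] at h1
    linarith
  · intro h E F
    have hc : z₃ * w₂ / w₁ = -w₂ := by
      rw [h]
      field_simp
    unfold NT bk
    rw [hc, h]
    funext i
    fin_cases i <;> simp [Jm] <;> ring


end
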